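/- Let d ≥ 2, let μ be the uniform (normalized, rotation-invariant) probability measure on the unit sphere S = {v ∈ ℝ^d : ‖v‖ = 1}, let u ∈ ℝ^d be a fixed unit vector, and let 0 < α < 1. Then μ({v ∈ S : |⟨u, v⟩| ≥ α}) ≤ (1 − α²)^{(d−1)/2}. -/

import Mathlib

open scoped RealInnerProductSpace
open MeasureTheory

/-!
A rotation-invariant measure gives the same mass to double cones around different axes. Computing
the product of two such measures on `{(x, v) | v ∈ doubleCone x α}` in both orders therefore shows
that both give a double cone the same proportion of their mass, and it suffices to estimate this
proportion for Lebesgue measure on the unit ball of `ℝ^d`. Write `v = s • u + y` with `y ⊥ u` and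
substitute `√(1 - α ^ 2) • y` for `y`; the Jacobian is the factor `(1 - α ^ 2) ^ ((d - 1) / 2)`.
The part of the cone in the ball becomes
`α ^ 2 * ‖y‖ ^ 2 ≤ s ^ 2 ≤ α ^ 2 * ‖y‖ ^ 2 + (1 - ‖y‖ ^ 2)`, and since `√(p + t) - √p ≤ √t`, its
slice at each `y` is no longer than the slice `s ^ 2 ≤ 1 - ‖y‖ ^ 2` of the ball.
-/

section

open Module Metric Set

section Slices

theorem volume_setOf_sq_mem_Icc_le {p : ℝ} (hp : 0 ≤ p) (t : ℝ) :
    volume {s : ℝ | s ^ 2 ∈ Icc p (p + t)} ≤ volume {s : ℝ | s ^ 2 ≤ t} := by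
  rcases lt_or_ge t 0 with ht | ht
  · simp [Icc_eq_empty_of_lt (show p + t < p by linarith)]
  have subset_union : {s : ℝ | s ^ 2 ∈ Icc p (p + t)} ⊆
      Icc √p (√p + √t) ∪ Icc (-(√p + √t)) (-√p) := by
    rintro s ⟨hps, hst⟩
    have sqrt_le_abs : √p ≤ |s| := Real.sqrt_le_iff.2 ⟨abs_nonneg s, by rwa [sq_abs]⟩
    have abs_le_add : |s| ≤ √p + √t := by
      refine abs_le_of_sq_le_sq ?_ (by positivity)
      nlinarith [Real.sq_sqrt hp, Real.sq_sqrt ht, Real.sqrt_nonneg p, Real.sqrt_nonneg t]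
    grind
  calc volume {s : ℝ | s ^ 2 ∈ Icc p (p + t)}
    _ ≤ volume (Icc √p (√p + √t)) + volume (Icc (-(√p + √t)) (-√p)) :=
      (measure_mono subset_union).trans (measure_union_le _ _)
    _ = volume (Icc (-√t) √t) := by
      simp only [Real.volume_Icc]
      rw [← ENNReal.ofReal_add (by ring_nf; positivity) (by ring_nf; positivity)]
      ring_nf
    _ = volume {s : ℝ | s ^ 2 ≤ t} := by
      congr 1
      ext s
      exact (Real.sq_le ht).symm

variable {Y : Type*} [MeasurableSpace Y]

theorem volume_prod_setOf_sq_mem_Icc_le (ν : Measure Y) [SFinite ν] {f g : Y → ℝ}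
    (hf : Measurable f) (hg : Measurable g) (hf0 : 0 ≤ f) :
    (volume.prod ν) {p : ℝ × Y | p.1 ^ 2 ∈ Icc (f p.2) (f p.2 + g p.2)} ≤
      (volume.prod ν) {p : ℝ × Y | p.1 ^ 2 ≤ g p.2} := by
  have measurableSet_source :
      MeasurableSet {p : ℝ × Y | p.1 ^ 2 ∈ Icc (f p.2) (f p.2 + g p.2)} :=
    (measurableSet_le (f := fun p : ℝ × Y ↦ f p.2) (by fun_prop) (by fun_prop)).inter
      (measurableSet_le (f := fun p : ℝ × Y ↦ p.1 ^ 2) (by fun_prop) (by fun_prop))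
  have measurableSet_target : MeasurableSet {p : ℝ × Y | p.1 ^ 2 ≤ g p.2} :=
    measurableSet_le (by fun_prop) (by fun_prop)
  rw [Measure.prod_apply_symm measurableSet_source, Measure.prod_apply_symm measurableSet_target]
  exact lintegral_mono fun y ↦ volume_setOf_sq_mem_Icc_le (hf0 y) (g y)

end Slices

theorem prod_apply_eq_ofReal_pow_mul_preimage_smul {X F : Type*} [MeasurableSpace X]
    [NormedAddCommGroup F] [NormedSpace ℝ F] [FiniteDimensional ℝ F] [MeasurableSpace F]
    [BorelSpace F] (κ : Measure X) [SFinite κ] (ν : Measure F) [ν.IsAddHaarMeasure]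
    {r : ℝ} (hr : 0 < r) {s : Set (X × F)} (hs : MeasurableSet s) :
    (κ.prod ν) s =
      ENNReal.ofReal (r ^ finrank ℝ F) * (κ.prod ν) (Prod.map id (r • ·) ⁻¹' s) := by
  have map_prod : (κ.prod ν).map (Prod.map id (r • ·)) =
      ENNReal.ofReal (r ^ finrank ℝ F)⁻¹ • κ.prod ν := by
    rw [← Measure.map_prod_map _ _ measurable_id (by fun_prop), Measure.map_id,
      Measure.map_addHaar_smul ν hr.ne', Measure.prod_smul_right, abs_of_pos (by positivity)]
  rw [← Measure.map_apply (by fun_prop) hs, map_prod, Measure.smul_apply, smul_eq_mul,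
    ← mul_assoc, ← ENNReal.ofReal_mul (by positivity), mul_inv_cancel₀ (by positivity),
    ENNReal.ofReal_one, one_mul]

variable {E : Type*} [NormedAddCommGroup E] [InnerProductSpace ℝ E]

/-- The closed double cone around the line `ℝ u`: the vectors `v` whose angle `θ` with `u`
satisfies `α ≤ |cos θ|`. The condition is multiplied out by the norms, so that `0` belongs to
every double cone. -/
def doubleCone (u : E) (α : ℝ) : Set E :=
  {v | α * (‖u‖ * ‖v‖) ≤ |⟪u, v⟫|}

section DoubleCone

theorem norm_smul_add_sq {u y : E} (hu : ‖u‖ = 1) (hy : ⟪u, y⟫ = 0) (s : ℝ) :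
    ‖s • u + y‖ ^ 2 = s ^ 2 + ‖y‖ ^ 2 := by
  simp [norm_add_sq_real, real_inner_smul_left, norm_smul, hu, hy]

theorem mem_doubleCone_comm {u v : E} {α : ℝ} : v ∈ doubleCone u α ↔ u ∈ doubleCone v α := by
  simp only [doubleCone, mem_ofPred_eq, real_inner_comm, mul_comm ‖u‖]

theorem preimage_doubleCone (g : E ≃ₗᵢ[ℝ] E) (u : E) (α : ℝ) :
    g ⁻¹' doubleCone (g u) α = doubleCone u α := by
  simp [doubleCone]

theorem doubleCone_smul {c : ℝ} (hc : c ≠ 0) (u : E) (α : ℝ) :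
    doubleCone (c • u) α = doubleCone u α := by
  ext v
  simp only [doubleCone, mem_ofPred_eq, norm_smul, Real.norm_eq_abs, real_inner_smul_left, abs_mul]
  rw [mul_assoc, mul_left_comm, mul_le_mul_iff_right₀ (abs_pos.2 hc)]

theorem isClosed_setOf_mem_doubleCone (α : ℝ) :
    IsClosed {p : E × E | p.2 ∈ doubleCone p.1 α} :=
  isClosed_le (f := fun p : E × E ↦ α * (‖p.1‖ * ‖p.2‖)) (g := fun p ↦ |⟪p.1, p.2⟫|)
    (by fun_prop) (by fun_prop)

theorem isClosed_doubleCone (u : E) (α : ℝ) : IsClosed (doubleCone u α) :=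
  (isClosed_setOf_mem_doubleCone α).preimage (Continuous.prodMk_right u)

theorem smul_add_mem_doubleCone_iff {u y : E} (hu : ‖u‖ = 1) (hy : ⟪u, y⟫ = 0) {α : ℝ}
    (hα : 0 ≤ α) (s : ℝ) :
    s • u + y ∈ doubleCone u α ↔ α ^ 2 * ‖y‖ ^ 2 ≤ (1 - α ^ 2) * s ^ 2 := by
  have inner_eq : ⟪u, s • u + y⟫ = s := by
    simp [inner_add_right, real_inner_smul_right, hy, hu]
  rw [doubleCone, mem_ofPred_eq, hu, one_mul, inner_eq,
    ← sq_le_sq₀ (by positivity) (abs_nonneg s), mul_pow, sq_abs,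
    norm_smul_add_sq hu hy]
  grind

theorem smul_add_mem_closedBall_iff {u y : E} (hu : ‖u‖ = 1) (hy : ⟪u, y⟫ = 0) (s : ℝ) :
    s • u + y ∈ closedBall (0 : E) 1 ↔ s ^ 2 ≤ 1 - ‖y‖ ^ 2 := by
  rw [mem_closedBall_zero_iff, ← sq_le_one_iff₀ (norm_nonneg _), norm_smul_add_sq hu hy,
    le_sub_iff_add_le]

theorem smul_add_smul_mem_doubleCone_inter_closedBall_iff {u y : E} (hu : ‖u‖ = 1)
    (hy : ⟪u, y⟫ = 0) {α r : ℝ} (hα : 0 ≤ α) (hr : 0 < r) (hr_sq : r ^ 2 = 1 - α ^ 2) (s : ℝ) :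
    s • u + r • y ∈ doubleCone u α ∩ closedBall 0 1 ↔
      s ^ 2 ∈ Icc (α ^ 2 * ‖y‖ ^ 2) (α ^ 2 * ‖y‖ ^ 2 + (1 - ‖y‖ ^ 2)) := by
  have hry : ⟪u, r • y⟫ = 0 := by rw [real_inner_smul_right, hy, mul_zero]
  have norm_sq_smul : ‖r • y‖ ^ 2 = r ^ 2 * ‖y‖ ^ 2 := by
    rw [norm_smul, mul_pow, Real.norm_eq_abs, sq_abs]
  rw [mem_inter_iff, smul_add_mem_doubleCone_iff hu hry hα, smul_add_mem_closedBall_iff hu hry,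
    norm_sq_smul, ← hr_sq, mul_left_comm, mul_le_mul_iff_right₀ (by positivity), hr_sq, mem_Icc]
  grind

end DoubleCone

theorem sqrt_pow_finrank_orthogonal_span_singleton [FiniteDimensional ℝ E] {u : E}
    (hu : u ≠ 0) {x : ℝ} (hx : 0 ≤ x) :
    √x ^ finrank ℝ (ℝ ∙ u)ᗮ = x ^ (((finrank ℝ E : ℝ) - 1) / 2) := by
  rw [← (ℝ ∙ u).finrank_add_finrank_orthogonal, finrank_span_singleton hu, Real.sqrt_eq_rpow,
    ← Real.rpow_mul_natCast hx]
  push_cast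
  ring_nf

variable [MeasurableSpace E]

/-- Invariance of a measure under all linear isometries of the space, reflections included. -/
def IsRotationInvariant (μ : Measure E) : Prop :=
  ∀ g : E ≃ₗᵢ[ℝ] E, μ.map g = μ

variable [BorelSpace E] {μ ν : Measure E}

section RotationInvariant

theorem isRotationInvariant_volume [FiniteDimensional ℝ E] :
    IsRotationInvariant (volume : Measure E) :=
  fun g ↦ g.measurePreserving.map_eq

theorem IsRotationInvariant.measurePreserving (hμ : IsRotationInvariant μ) (g : E ≃ₗᵢ[ℝ] E) :
    MeasurePreserving g μ μ :=
  ⟨g.continuous.measurable, hμ g⟩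

theorem IsRotationInvariant.restrict (hμ : IsRotationInvariant μ) {s : Set E}
    (hs : MeasurableSet s) (hs_inv : ∀ g : E ≃ₗᵢ[ℝ] E, g ⁻¹' s = s) :
    IsRotationInvariant (μ.restrict s) := fun g ↦ by
  simpa only [hs_inv] using ((hμ.measurePreserving g).restrict_preimage hs).map_eq

theorem IsRotationInvariant.measure_doubleCone_eq (hμ : IsRotationInvariant μ) {u v : E}
    (hu : u ≠ 0) (hv : v ≠ 0) (α : ℝ) :
    μ (doubleCone u α) = μ (doubleCone v α) := by
  obtain ⟨g, hg⟩ : ∃ g : E ≃ₗᵢ[ℝ] E, g (‖v‖ • u) = ‖u‖ • v :=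
    ⟨_, Submodule.reflection_sub (by simp [norm_smul, mul_comm])⟩
  calc μ (doubleCone u α)
    _ = μ (g ⁻¹' doubleCone (‖u‖ • v) α) := by
      rw [← hg, preimage_doubleCone, doubleCone_smul (norm_ne_zero_iff.2 hv)]
    _ = μ (doubleCone v α) := by
      rw [(hμ.measurePreserving g).measure_preimage
        (isClosed_doubleCone _ α).measurableSet.nullMeasurableSet,
        doubleCone_smul (norm_ne_zero_iff.2 hu)]

variable [SecondCountableTopology E]

theorem IsRotationInvariant.prod_setOf_mem_doubleCone [SFinite μ] (hμ : IsRotationInvariant μ)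
    (hν0 : ∀ᵐ x ∂ν, x ≠ 0) {u : E} (hu : u ≠ 0) (α : ℝ) :
    (ν.prod μ) {p | p.2 ∈ doubleCone p.1 α} = μ (doubleCone u α) * ν univ := by
  rw [Measure.prod_apply (isClosed_setOf_mem_doubleCone α).measurableSet, ← lintegral_const]
  refine lintegral_congr_ae ?_
  filter_upwards [hν0] with x hx using hμ.measure_doubleCone_eq hx hu α

theorem IsRotationInvariant.measure_doubleCone_mul_measure_univ [SFinite μ] [SFinite ν]
    (hμ : IsRotationInvariant μ) (hν : IsRotationInvariant ν) (hμ0 : ∀ᵐ x ∂μ, x ≠ 0)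
    (hν0 : ∀ᵐ x ∂ν, x ≠ 0) {u : E} (hu : u ≠ 0) (α : ℝ) :
    μ (doubleCone u α) * ν univ = ν (doubleCone u α) * μ univ := by
  rw [← hμ.prod_setOf_mem_doubleCone hν0 hu α, ← hν.prod_setOf_mem_doubleCone hμ0 hu α,
    ← Measure.prod_swap,
    Measure.map_apply measurable_swap (isClosed_setOf_mem_doubleCone α).measurableSet]
  simp only [preimage_ofPred_eq, Prod.fst_swap, Prod.snd_swap, mem_doubleCone_comm]

end RotationInvariant

variable [FiniteDimensional ℝ E]

section UnitBall

theorem measurePreserving_smul_add_orthogonal {u : E} (hu : ‖u‖ = 1) :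
    MeasurePreserving (fun p : ℝ × (ℝ ∙ u)ᗮ ↦ p.1 • u + (p.2 : E)) := by
  let e : WithLp 2 (ℝ × (ℝ ∙ u)ᗮ) ≃ₗᵢ[ℝ] E :=
    (LinearIsometryEquiv.withLpProdCongr 2 (LinearIsometryEquiv.toSpanUnitSingleton u hu)
      (LinearIsometryEquiv.refl ℝ _)).trans (ℝ ∙ u).orthogonalDecomposition.symm
  exact e.measurePreserving.comp (WithLp.volume_preserving_toLp ℝ (ℝ ∙ u)ᗮ)

theorem volume_doubleCone_inter_closedBall_le {u : E} (hu : ‖u‖ = 1) {α : ℝ} (hα0 : 0 ≤ α)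
    (hα1 : α < 1) :
    volume (doubleCone u α ∩ closedBall 0 1) ≤
      ENNReal.ofReal (√(1 - α ^ 2) ^ finrank ℝ (ℝ ∙ u)ᗮ) * volume (closedBall (0 : E) 1) := by
  have one_sub_sq_pos : 0 < 1 - α ^ 2 := by nlinarith
  set r := √(1 - α ^ 2)
  have r_pos : 0 < r := Real.sqrt_pos.2 one_sub_sq_pos
  let φ : ℝ × (ℝ ∙ u)ᗮ → E := fun p ↦ p.1 • u + (p.2 : E)
  have hφ : MeasurePreserving φ := measurePreserving_smul_add_orthogonal hu
  have inner_eq_zero (y : (ℝ ∙ u)ᗮ) : ⟪u, (y : E)⟫ = 0 :=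
    Submodule.mem_orthogonal_singleton_iff_inner_right.1 y.2
  have measurableSet_cone : MeasurableSet (doubleCone u α ∩ closedBall 0 1) :=
    (isClosed_doubleCone u α).measurableSet.inter measurableSet_closedBall
  have preimage_ball : φ ⁻¹' closedBall 0 1 = {p | p.1 ^ 2 ≤ 1 - ‖p.2‖ ^ 2} :=
    ext fun p ↦ smul_add_mem_closedBall_iff hu (inner_eq_zero p.2) p.1
  have preimage_cone : Prod.map id (r • ·) ⁻¹' (φ ⁻¹' (doubleCone u α ∩ closedBall 0 1)) =
      {p | p.1 ^ 2 ∈ Icc (α ^ 2 * ‖p.2‖ ^ 2) (α ^ 2 * ‖p.2‖ ^ 2 + (1 - ‖p.2‖ ^ 2))} :=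
    ext fun p ↦ smul_add_smul_mem_doubleCone_inter_closedBall_iff hu (inner_eq_zero p.2) hα0 r_pos
      (Real.sq_sqrt one_sub_sq_pos.le) p.1
  calc volume (doubleCone u α ∩ closedBall 0 1)
    _ = ENNReal.ofReal (r ^ finrank ℝ (ℝ ∙ u)ᗮ) *
        volume {p : ℝ × (ℝ ∙ u)ᗮ |
          p.1 ^ 2 ∈ Icc (α ^ 2 * ‖p.2‖ ^ 2) (α ^ 2 * ‖p.2‖ ^ 2 + (1 - ‖p.2‖ ^ 2))} := by
      rw [← hφ.measure_preimage measurableSet_cone.nullMeasurableSet, Measure.volume_eq_prod,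
        prod_apply_eq_ofReal_pow_mul_preimage_smul _ _ r_pos (hφ.measurable measurableSet_cone),
        preimage_cone]
    _ ≤ ENNReal.ofReal (r ^ finrank ℝ (ℝ ∙ u)ᗮ) *
        volume {p : ℝ × (ℝ ∙ u)ᗮ | p.1 ^ 2 ≤ 1 - ‖p.2‖ ^ 2} := by
      gcongr _ * ?_
      exact volume_prod_setOf_sq_mem_Icc_le volume
        (f := fun y : (ℝ ∙ u)ᗮ ↦ α ^ 2 * ‖y‖ ^ 2) (g := fun y ↦ 1 - ‖y‖ ^ 2)
        (by fun_prop) (by fun_prop) fun y ↦ by positivity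
    _ = ENNReal.ofReal (r ^ finrank ℝ (ℝ ∙ u)ᗮ) * volume (closedBall (0 : E) 1) := by
      rw [← preimage_ball, hφ.measure_preimage measurableSet_closedBall.nullMeasurableSet]

end UnitBall

theorem IsRotationInvariant.measure_doubleCone_le [SFinite μ] (hμ : IsRotationInvariant μ)
    (hμ0 : ∀ᵐ x ∂μ, x ≠ 0) {u : E} (hu : u ≠ 0) {α : ℝ} (hα0 : 0 ≤ α) (hα1 : α < 1) :
    μ (doubleCone u α) ≤
      ENNReal.ofReal ((1 - α ^ 2) ^ (((finrank ℝ E : ℝ) - 1) / 2)) * μ univ := by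
  have : Nontrivial E := ⟨u, 0, hu⟩
  obtain ⟨e, he, cone_eq⟩ : ∃ e : E, ‖e‖ = 1 ∧ doubleCone e α = doubleCone u α :=
    ⟨‖u‖⁻¹ • u, norm_smul_inv_norm hu, doubleCone_smul (inv_ne_zero (norm_ne_zero_iff.2 hu)) u α⟩
  have e_ne_zero : e ≠ 0 := norm_ne_zero_iff.1 (by simp [he])
  set B : Set E := closedBall 0 1
  set c := ENNReal.ofReal ((1 - α ^ 2) ^ (((finrank ℝ E : ℝ) - 1) / 2)) with hc
  have volume_cone_le : volume (doubleCone u α ∩ B) ≤ c * volume B := by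
    rw [hc, ← sqrt_pow_finrank_orthogonal_span_singleton e_ne_zero (by nlinarith)]
    exact cone_eq ▸ volume_doubleCone_inter_closedBall_le he hα0 hα1
  have ball_invariant : IsRotationInvariant (volume.restrict B) :=
    isRotationInvariant_volume.restrict measurableSet_closedBall fun g ↦ by simp [B]
  have volume_ball_ne_zero : volume B ≠ 0 := (measure_closedBall_pos _ _ one_pos).ne'
  refine (ENNReal.mul_le_mul_iff_left volume_ball_ne_zero measure_closedBall_lt_top.ne).1 ?_
  calc μ (doubleCone u α) * volume B
    _ = volume (doubleCone u α ∩ B) * μ univ := by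
      simpa only [Measure.restrict_apply_univ,
          Measure.restrict_apply (isClosed_doubleCone u α).measurableSet] using
        hμ.measure_doubleCone_mul_measure_univ ball_invariant hμ0
          (ae_restrict_of_ae (Measure.ae_ne volume 0)) hu α
    _ ≤ c * volume B * μ univ := by gcongr
    _ = c * μ univ * volume B := mul_right_comm _ _ _

theorem stmt_16_general [SFinite μ] (hμ : IsRotationInvariant μ) {u : E} (hu : ‖u‖ = 1)
    {α : ℝ} (hα0 : 0 ≤ α) (hα1 : α < 1) :
    μ {v | ‖v‖ = 1 ∧ α ≤ |⟪u, v⟫|} ≤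
      ENNReal.ofReal ((1 - α ^ 2) ^ (((finrank ℝ E : ℝ) - 1) / 2)) * μ {v | ‖v‖ = 1} := by
  have u_ne_zero : u ≠ 0 := norm_ne_zero_iff.1 (by simp [hu])
  have sphere_eq : sphere (0 : E) 1 = {v | ‖v‖ = 1} := by ext; simp
  have cap_eq : {v | ‖v‖ = 1 ∧ α ≤ |⟪u, v⟫|} = doubleCone u α ∩ sphere 0 1 := by
    ext v
    simp +contextual [doubleCone, hu, and_comm]
  have restrict_invariant : IsRotationInvariant (μ.restrict (sphere 0 1)) :=
    hμ.restrict isClosed_sphere.measurableSet fun g ↦ by simp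
  have ae_ne_zero : ∀ᵐ v ∂μ.restrict (sphere 0 1), v ≠ 0 := by
    filter_upwards [ae_restrict_mem isClosed_sphere.measurableSet] with v hv
    exact ne_zero_of_mem_unit_sphere ⟨v, hv⟩
  rw [cap_eq, ← sphere_eq]
  simpa only [Measure.restrict_apply_univ,
      Measure.restrict_apply (isClosed_doubleCone u α).measurableSet] using
    restrict_invariant.measure_doubleCone_le ae_ne_zero u_ne_zero hα0 hα1

end

/-- If `μ` is the uniform (rotation-invariant) probability measure on the
unit sphere of `ℝ^d` (`d ≥ 2`), `u` is a fixed unit vector, and `0 < α < 1`, then the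
measure of the spherical cap `{v : ‖v‖ = 1, |⟨u,v⟩| ≥ α}` is at most
`(1 - α²)^{(d-1)/2}`. -/
theorem stmt_16 {d : ℕ} (hd : 2 ≤ d)
    (μ : Measure (EuclideanSpace ℝ (Fin d)))
    (hprob : IsProbabilityMeasure μ)
    (hsphere : μ {v : EuclideanSpace ℝ (Fin d) | ‖v‖ = 1} = 1)
    (hrot : ∀ g : EuclideanSpace ℝ (Fin d) ≃ₗᵢ[ℝ] EuclideanSpace ℝ (Fin d),
      Measure.map (⇑g) μ = μ)
    (u : EuclideanSpace ℝ (Fin d)) (hu : ‖u‖ = 1)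
    (α : ℝ) (hα0 : 0 < α) (hα1 : α < 1) :
    μ {v : EuclideanSpace ℝ (Fin d) | ‖v‖ = 1 ∧ α ≤ |⟪u, v⟫|} ≤
      ENNReal.ofReal ((1 - α ^ 2) ^ (((d : ℝ) - 1) / 2)) := by
  simpa [hsphere] using stmt_16_general hrot hu hα0.le hα1
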